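/- Let T ⊆ ℂ be the set of complex numbers λ with λ^8 = 1 and λ ≠ 1 (the seven nontrivial 8th roots of unity). Then (1/8) · Σ_{λ ∈ T} λ(1+λ)(1-λ)/(1-λ)^3 = -7/8, and (1/8) · Σ_{λ ∈ T} λ(1+λ)(1-λ^3)/(1-λ)^3 = -5/8. -/

import Mathlib

/-!
Over the `n`-th roots of unity `λ ≠ 1` in a field, put `S k = ∑ λ ^ k / (1 - λ)` and
`T k = ∑ λ ^ k / (1 - λ) ^ 2`. The differences `S k - S (k + 1) = ∑ λ ^ k = -1` (for `0 < k < n`)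
and `T k - T (k + 1) = S k` determine both sequences up to an additive constant, and the constants
are fixed because each sequence sums to zero over a full period of `k`. The eta sum
`∑ λ * (1 + λ) * (1 - λ ^ k) / (1 - λ) ^ 3` vanishes for `k = 0` and grows by
`T (k + 1) + T (k + 2)` from `k` to `k + 1`, so six times it is `-k * (n - k) * (n - 2 * k)` for
every `k ≤ n`; the theorem is the case `n = 8`, `k = 1, 3`.
-/

open Finset Polynomial

section CommRing

variable {R : Type*} [CommRing R]

lemma two_mul_sum_range_cast (m : ℕ) : 2 * ∑ k ∈ range m, (k : R) = m * (m - 1) := by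
  induction m with
  | zero => simp
  | succ m ih =>
    rw [sum_range_succ, mul_add, ih]
    push_cast
    ring

lemma six_mul_sum_range_mul_sub (a : R) (m : ℕ) :
    6 * ∑ k ∈ range m, (k : R) * (a - k) = m * (m - 1) * (3 * a - 2 * m + 1) := by
  induction m with
  | zero => simp
  | succ m ih =>
    rw [sum_range_succ, mul_add, ih]
    push_cast
    ring

end CommRing

section Domain

variable {R : Type*} [CommRing R] [IsDomain R] {n k : ℕ} {z ζ : R}

variable (R n) in
open Classical in
/-- The set `{z | z ^ n = 1 ∧ z ≠ 1}`, over which the eta invariant of a lens space with cyclic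
fundamental group of order `n` is summed. As for `nthRootsFinset`, it is empty when `n = 0`. -/
noncomputable def nontrivialRootsOfUnity : Finset R :=
  (nthRootsFinset n (1 : R)).erase 1

lemma one_sub_ne_zero_of_mem_nontrivialRootsOfUnity (hz : z ∈ nontrivialRootsOfUnity R n) :
    1 - z ≠ 0 := by
  classical exact sub_ne_zero.mpr (ne_of_mem_erase hz).symm

variable [NeZero n]

lemma mem_nontrivialRootsOfUnity : z ∈ nontrivialRootsOfUnity R n ↔ z ^ n = 1 ∧ z ≠ 1 := by
  classical
  rw [nontrivialRootsOfUnity, mem_erase, mem_nthRootsFinset (NeZero.pos n), and_comm]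

lemma coe_nontrivialRootsOfUnity :
    (nontrivialRootsOfUnity R n : Set R) = {z | z ^ n = 1 ∧ z ≠ 1} :=
  Set.ext fun _ => mem_nontrivialRootsOfUnity

lemma sum_range_pow_eq_zero_of_mem_nontrivialRootsOfUnity
    (hz : z ∈ nontrivialRootsOfUnity R n) : ∑ k ∈ range n, z ^ k = 0 := by
  obtain ⟨hzn, hz1⟩ := mem_nontrivialRootsOfUnity.mp hz
  refine eq_zero_of_ne_zero_of_mul_left_eq_zero (sub_ne_zero.mpr hz1) ?_
  rw [mul_geom_sum, hzn, sub_self]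

lemma sum_range_sum_nontrivialRootsOfUnity_pow_mul (g : R → R) :
    ∑ k ∈ range n, ∑ z ∈ nontrivialRootsOfUnity R n, z ^ k * g z = 0 := by
  rw [sum_comm]
  refine sum_eq_zero fun z hz => ?_
  rw [← sum_mul, sum_range_pow_eq_zero_of_mem_nontrivialRootsOfUnity hz, zero_mul]

lemma sum_nthRootsFinset_pow (hζ : IsPrimitiveRoot ζ n) (hk : ¬ n ∣ k) :
    ∑ z ∈ nthRootsFinset n (1 : R), z ^ k = 0 := by
  have hζ_mem : ζ ∈ nthRootsFinset n (1 : R) := hζ.mem_nthRootsFinset (NeZero.pos n)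
  have mapsTo : Set.MapsTo (ζ * ·) (nthRootsFinset n (1 : R)) (nthRootsFinset n (1 : R)) :=
    fun z hz => by simpa only [mul_one, mem_coe] using mul_mem_nthRootsFinset hζ_mem hz
  have injOn : Set.InjOn (ζ * ·) (nthRootsFinset n (1 : R)) :=
    (mul_right_injective₀ (hζ.ne_zero (NeZero.ne n))).injOn
  have sum_invariant : ∑ z ∈ nthRootsFinset n (1 : R), (ζ * z) ^ k =
      ∑ z ∈ nthRootsFinset n (1 : R), z ^ k :=
    sum_nbij (ζ * ·) mapsTo injOn (surjOn_of_injOn_of_card_le _ mapsTo injOn le_rfl)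
      fun _ _ => rfl
  have hζk : ζ ^ k - 1 ≠ 0 := sub_ne_zero.mpr (mt (hζ.pow_eq_one_iff_dvd k).mp hk)
  refine eq_zero_of_ne_zero_of_mul_left_eq_zero hζk ?_
  simp only [mul_pow, ← mul_sum] at sum_invariant
  rw [sub_mul, sum_invariant, one_mul, sub_self]

lemma sum_nontrivialRootsOfUnity_pow (hζ : IsPrimitiveRoot ζ n) (hk : ¬ n ∣ k) :
    ∑ z ∈ nontrivialRootsOfUnity R n, z ^ k = -1 := by
  classical
  have h := add_sum_erase _ (fun z : R => z ^ k) (one_mem_nthRootsFinset (NeZero.pos n))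
  rw [sum_nthRootsFinset_pow hζ hk, one_pow] at h
  exact eq_neg_of_add_eq_zero_right h

end Domain

section Field

variable {K : Type*} [Field K] {n k : ℕ} [NeZero n] {ζ : K}

lemma sum_pow_succ_div_one_sub_eq_add (hζ : IsPrimitiveRoot ζ n) (hk : k < n) :
    ∑ z ∈ nontrivialRootsOfUnity K n, z ^ (k + 1) / (1 - z) =
      ∑ z ∈ nontrivialRootsOfUnity K n, z / (1 - z) + k := by
  induction k with
  | zero => simp
  | succ k ih =>
    have step : ∑ z ∈ nontrivialRootsOfUnity K n, z ^ (k + 1 + 1) / (1 - z) =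
        ∑ z ∈ nontrivialRootsOfUnity K n, z ^ (k + 1) / (1 - z) -
          ∑ z ∈ nontrivialRootsOfUnity K n, z ^ (k + 1) := by
      rw [← sum_sub_distrib]
      refine sum_congr rfl fun z hz => ?_
      have hz1 := one_sub_ne_zero_of_mem_nontrivialRootsOfUnity hz
      field_simp
      ring
    rw [step, ih (by omega),
      sum_nontrivialRootsOfUnity_pow hζ (Nat.not_dvd_of_pos_of_lt k.succ_pos hk)]
    push_cast
    ring

lemma two_mul_sum_div_one_sub (hζ : IsPrimitiveRoot ζ n) :
    2 * ∑ z ∈ nontrivialRootsOfUnity K n, z / (1 - z) = 1 - n := by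
  have hn : (n : K) ≠ 0 := hζ.neZero'.ne
  have period : ∑ k ∈ range n, (∑ z ∈ nontrivialRootsOfUnity K n, z / (1 - z) + (k : K)) = 0 := by
    rw [← sum_range_sum_nontrivialRootsOfUnity_pow_mul (n := n) fun z : K => z / (1 - z)]
    refine sum_congr rfl fun k hk => ?_
    rw [← sum_pow_succ_div_one_sub_eq_add hζ (mem_range.mp hk)]
    simp only [pow_succ, mul_div_assoc]
  rw [sum_add_distrib, sum_const, card_range, nsmul_eq_mul] at period
  refine mul_left_cancel₀ hn ?_
  linear_combination 2 * period - two_mul_sum_range_cast (R := K) n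

lemma two_mul_sum_pow_succ_div_one_sub (hζ : IsPrimitiveRoot ζ n) (hk : k < n) :
    2 * ∑ z ∈ nontrivialRootsOfUnity K n, z ^ (k + 1) / (1 - z) = 2 * k + 1 - n := by
  rw [sum_pow_succ_div_one_sub_eq_add hζ hk, mul_add, two_mul_sum_div_one_sub hζ]
  ring

lemma two_mul_sum_pow_succ_div_one_sub_sq_eq_add (hζ : IsPrimitiveRoot ζ n) (hk : k ≤ n) :
    2 * ∑ z ∈ nontrivialRootsOfUnity K n, z ^ (k + 1) / (1 - z) ^ 2 =
      2 * ∑ z ∈ nontrivialRootsOfUnity K n, z / (1 - z) ^ 2 + (k * (n - k) : K) := by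
  induction k with
  | zero => simp
  | succ k ih =>
    have step : ∑ z ∈ nontrivialRootsOfUnity K n, z ^ (k + 1 + 1) / (1 - z) ^ 2 =
        ∑ z ∈ nontrivialRootsOfUnity K n, z ^ (k + 1) / (1 - z) ^ 2 -
          ∑ z ∈ nontrivialRootsOfUnity K n, z ^ (k + 1) / (1 - z) := by
      rw [← sum_sub_distrib]
      refine sum_congr rfl fun z hz => ?_
      have hz1 := one_sub_ne_zero_of_mem_nontrivialRootsOfUnity hz
      field_simp
      ring
    rw [step, mul_sub, ih (by omega), two_mul_sum_pow_succ_div_one_sub hζ hk]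
    push_cast
    ring

lemma twelve_mul_sum_div_one_sub_sq (hζ : IsPrimitiveRoot ζ n) :
    12 * ∑ z ∈ nontrivialRootsOfUnity K n, z / (1 - z) ^ 2 = 1 - (n : K) ^ 2 := by
  have hn : (n : K) ≠ 0 := hζ.neZero'.ne
  have period : ∑ k ∈ range n,
      (2 * ∑ z ∈ nontrivialRootsOfUnity K n, z / (1 - z) ^ 2 + (k : K) * (n - k)) = 0 := by
    rw [← sum_range_sum_nontrivialRootsOfUnity_pow_mul (n := n) fun z : K => 2 * (z / (1 - z) ^ 2)]
    refine sum_congr rfl fun k hk => ?_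
    rw [← two_mul_sum_pow_succ_div_one_sub_sq_eq_add hζ (mem_range.mp hk).le, mul_sum]
    exact sum_congr rfl fun z _ => by ring
  rw [sum_add_distrib, sum_const, card_range, nsmul_eq_mul] at period
  refine mul_left_cancel₀ hn ?_
  linear_combination 6 * period - six_mul_sum_range_mul_sub (n : K) n

lemma six_mul_sum_mul_one_add_mul_one_sub_pow_div (hζ : IsPrimitiveRoot ζ n) (hk : k ≤ n) :
    6 * ∑ z ∈ nontrivialRootsOfUnity K n, z * (1 + z) * (1 - z ^ k) / (1 - z) ^ 3 =
      -(k * (n - k) * (n - 2 * k) : K) := by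
  induction k with
  | zero => simp
  | succ k ih =>
    have step : ∑ z ∈ nontrivialRootsOfUnity K n,
          z * (1 + z) * (1 - z ^ (k + 1)) / (1 - z) ^ 3 =
        ∑ z ∈ nontrivialRootsOfUnity K n, z * (1 + z) * (1 - z ^ k) / (1 - z) ^ 3 +
          (∑ z ∈ nontrivialRootsOfUnity K n, z ^ (k + 1) / (1 - z) ^ 2 +
            ∑ z ∈ nontrivialRootsOfUnity K n, z ^ (k + 1 + 1) / (1 - z) ^ 2) := by
      simp only [← sum_add_distrib]
      refine sum_congr rfl fun z hz => ?_
      have hz1 := one_sub_ne_zero_of_mem_nontrivialRootsOfUnity hz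
      field_simp
      ring
    have h₁ := two_mul_sum_pow_succ_div_one_sub_sq_eq_add hζ (k.le_succ.trans hk)
    have h₂ := two_mul_sum_pow_succ_div_one_sub_sq_eq_add hζ hk
    rw [step]
    push_cast at h₂ ⊢
    linear_combination ih (k.le_succ.trans hk) + 3 * h₁ + 3 * h₂ +
      twelve_mul_sum_div_one_sub_sq hζ

theorem eta_L5_sums_general (hζ : IsPrimitiveRoot ζ n) (hk : k ≤ n) :
    6 * ∑ᶠ z ∈ {z : K | z ^ n = 1 ∧ z ≠ 1}, z * (1 + z) * (1 - z ^ k) / (1 - z) ^ 3 =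
      -(k * (n - k) * (n - 2 * k) : K) := by
  rw [← coe_nontrivialRootsOfUnity, finsum_mem_coe_finset,
    six_mul_sum_mul_one_add_mul_one_sub_pow_div hζ hk]

end Field

/-- Eta-invariant computations for the 5-dimensional lens space bundle `L⁵(1,1)`:
summing over the seven nontrivial 8th roots of unity,
`(1/8)·Σ λ(1+λ)(1-λ)/(1-λ)³ = -7/8` and `(1/8)·Σ λ(1+λ)(1-λ³)/(1-λ)³ = -5/8`. -/
theorem eta_L5_sums :
    (1 / 8 : ℂ) * ∑ᶠ z ∈ {z : ℂ | z ^ 8 = 1 ∧ z ≠ 1},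
        z * (1 + z) * (1 - z) / (1 - z) ^ 3 = -7 / 8 ∧
    (1 / 8 : ℂ) * ∑ᶠ z ∈ {z : ℂ | z ^ 8 = 1 ∧ z ≠ 1},
        z * (1 + z) * (1 - z ^ 3) / (1 - z) ^ 3 = -5 / 8 := by
  have hζ := Complex.isPrimitiveRoot_exp 8 (by norm_num)
  have h₁ := eta_L5_sums_general hζ (k := 1) (by norm_num)
  have h₃ := eta_L5_sums_general hζ (k := 3) (by norm_num)
  simp only [pow_one] at h₁
  push_cast at h₁ h₃
  exact ⟨by linear_combination h₁ / 48, by linear_combination h₃ / 48⟩
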